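/- Let s and q be integers with s + 1 ≥ q ≥ 2. Then ρ(H(2s+2q+4)) ≤ ρ(G_3(0,s,0,q)) < ρ(G_3(1,s,1,q−1)), and equality holds in the left inequality if and only if G_3(0,s,0,q) is isomorphic to H(2s+2q+4). -/

import Mathlib

open scoped Classical in
/-- The (real) adjacency matrix of a simple graph. -/
noncomputable def adjMat {V : Type} [Fintype V] (G : SimpleGraph V) : Matrix V V ℝ :=
  Matrix.of fun i j => if G.Adj i j then 1 else 0

/-- The spectral radius of a simple graph: the largest eigenvalue of its adjacency matrix. -/
noncomputable def specRad {V : Type} [Fintype V] (G : SimpleGraph V) : ℝ :=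
  sSup {t : ℝ | ∃ v : V → ℝ, v ≠ 0 ∧ (adjMat G).mulVec v = t • v}

/-- `G3 r s p q` is the tree obtained from a path `v₁ v₃ v₄ v₂` on 4 vertices
(`v₁ = 0, v₃ = 1, v₄ = 2, v₂ = 3`) by attaching `r` pendant vertices and `s` pendant
paths of length 2 to `v₁`, and `p` pendant vertices and `q` pendant paths of length 2
to `v₂`. It has order `r + p + 2s + 2q + 4`. -/
def G3 (r s p q : ℕ) :
    SimpleGraph (Fin 4 ⊕ ((Fin r ⊕ Fin s × Fin 2) ⊕ (Fin p ⊕ Fin q × Fin 2))) :=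
  SimpleGraph.fromRel (fun a b =>
    (∃ i : Fin 3, a = Sum.inl i.castSucc ∧ b = Sum.inl i.succ) ∨
    (∃ i : Fin r, a = Sum.inl 0 ∧ b = Sum.inr (Sum.inl (Sum.inl i))) ∨
    (∃ j : Fin s, a = Sum.inl 0 ∧ b = Sum.inr (Sum.inl (Sum.inr (j, 0)))) ∨
    (∃ j : Fin s, a = Sum.inr (Sum.inl (Sum.inr (j, 0))) ∧
      b = Sum.inr (Sum.inl (Sum.inr (j, 1)))) ∨
    (∃ i : Fin p, a = Sum.inl 3 ∧ b = Sum.inr (Sum.inr (Sum.inl i))) ∨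
    (∃ j : Fin q, a = Sum.inl 3 ∧ b = Sum.inr (Sum.inr (Sum.inr (j, 0)))) ∨
    (∃ j : Fin q, a = Sum.inr (Sum.inr (Sum.inr (j, 0))) ∧
      b = Sum.inr (Sum.inr (Sum.inr (j, 1)))))

/-!
For an eigenvalue `x = √y` of `G3 r s p q` with a positive eigenvector, eliminating the vertices of
the branches leaves the path `v₁ v₃ v₄ v₂`, on which the eigenvector equations are solvable exactly
when `y (α - 1) (β - 1) = α β`. Here `α` and `β` depend only on the branches at `v₁` and `v₂`
respectively. Once `α` and `β` are raised to at least `1`, the difference `D` of the two sides has a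
single sign change on `y > 1`, from negative to positive at `ρ²`. Hence at `y = ρ(G)²` the sign of
`D` for another tree `G'` of the family compares `ρ(G')` with `ρ(G)`. Balancing the branches keeps
`α + β` and increases `α β`, hence increases `D`; the exchange `G₃(0,s,0,q) → G₃(1,s,1,q-1)` makes
`D` negative.
-/

open Filter Matrix Set

section SpectralRadius

theorem eigenvalue_le_of_pos_of_vecMul_le {V R : Type*} [Fintype V] [Field R] [LinearOrder R]
    [IsStrictOrderedRing R] {A : Matrix V V R} (hA : ∀ i j, 0 ≤ A i j) {w : V → R}
    (hw : ∀ i, 0 < w i) {x : R} (hx : w ᵥ* A ≤ x • w) {v : V → R} (hv : v ≠ 0) {t : R}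
    (ht : A *ᵥ v = t • v) : t ≤ x := by
  have abs_le (i : V) : t * |v i| ≤ (A *ᵥ |v|) i :=
    calc t * |v i| ≤ |t * v i| := by
          rw [abs_mul]; exact mul_le_mul_of_nonneg_right (le_abs_self t) (abs_nonneg _)
      _ = |∑ j, A i j * v j| := congrArg abs (congrFun ht i).symm
      _ ≤ ∑ j, |A i j * v j| := Finset.abs_sum_le_sum_abs _ _
      _ = (A *ᵥ |v|) i := Finset.sum_congr rfl fun j _ => by
          rw [abs_mul, abs_of_nonneg (hA i j), Pi.abs_apply]
  have pairing_pos : 0 < w ⬝ᵥ |v| := by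
    obtain ⟨i, hi⟩ := Function.ne_iff.mp hv
    exact Finset.sum_pos' (fun j _ => mul_nonneg (hw j).le (abs_nonneg _))
      ⟨i, Finset.mem_univ i, mul_pos (hw i) (abs_pos.mpr hi)⟩
  refine le_of_mul_le_mul_right ?_ pairing_pos
  calc t * (w ⬝ᵥ |v|) = w ⬝ᵥ (t • |v|) := by rw [dotProduct_smul, smul_eq_mul]
    _ ≤ w ⬝ᵥ (A *ᵥ |v|) := dotProduct_le_dotProduct_of_nonneg_left abs_le fun i => (hw i).le
    _ = (w ᵥ* A) ⬝ᵥ |v| := dotProduct_mulVec _ _ _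
    _ ≤ (x • w) ⬝ᵥ |v| := dotProduct_le_dotProduct_of_nonneg_right hx (abs_nonneg v)
    _ = x * (w ⬝ᵥ |v|) := by rw [smul_dotProduct, smul_eq_mul]

open scoped Classical in
theorem adjMat_eq_adjMatrix {V : Type} [Fintype V] (G : SimpleGraph V) :
    adjMat G = G.adjMatrix ℝ := rfl

theorem specRad_eq_of_pos {V : Type} [Fintype V] [Nonempty V] {G : SimpleGraph V} {w : V → ℝ}
    {x : ℝ} (hw : ∀ i, 0 < w i) (h : adjMat G *ᵥ w = x • w) : specRad G = x := by
  classical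
  refine IsGreatest.csSup_eq ⟨⟨w, ?_, h⟩, ?_⟩
  · obtain ⟨i⟩ := ‹Nonempty V›
    exact Function.ne_iff.mpr ⟨i, (hw i).ne'⟩
  · rintro t ⟨v, hv, ht⟩
    refine eigenvalue_le_of_pos_of_vecMul_le (fun i j => ?_) hw ?_ hv ht
    · rw [adjMat_eq_adjMatrix, SimpleGraph.adjMatrix_apply]
      positivity
    · rw [← h, adjMat_eq_adjMatrix, ← vecMul_transpose, SimpleGraph.transpose_adjMatrix]

theorem adjMat_submatrix_iso {V W : Type} [Fintype V] [Fintype W] {G : SimpleGraph V}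
    {H : SimpleGraph W} (e : G ≃g H) : (adjMat H).submatrix e e = adjMat G := by
  classical
  ext i j
  exact if_congr e.map_adj_iff rfl rfl

theorem specRad_congr {V W : Type} [Fintype V] [Fintype W] {G : SimpleGraph V}
    {H : SimpleGraph W} (e : G ≃g H) : specRad G = specRad H := by
  have mulVec_comp (v : W → ℝ) : adjMat G *ᵥ (v ∘ e) = (adjMat H *ᵥ v) ∘ e := by
    rw [← adjMat_submatrix_iso e]
    exact (submatrix_mulVec_equiv _ _ e e.toEquiv).trans <|
      congrArg (fun u => (adjMat H *ᵥ u) ∘ e) (funext fun j => congrArg v (e.apply_symm_apply j))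
  have comp_injective : Function.Injective fun v : W → ℝ => v ∘ e :=
    e.surjective.injective_comp_right
  unfold specRad
  congr 1
  ext t
  refine (e.injective.surjective_comp_right (γ := ℝ)).exists.trans (exists_congr fun v => ?_)
  rw [mulVec_comp]
  exact and_congr (comp_injective.ne_iff' rfl) (comp_injective.eq_iff' rfl)

end SpectralRadius

section Adjacency

theorem adjMat_G3_mulVec {r s p q : ℕ}
    (f : Fin 4 ⊕ ((Fin r ⊕ Fin s × Fin 2) ⊕ (Fin p ⊕ Fin q × Fin 2)) → ℝ) :
    adjMat (G3 r s p q) *ᵥ f = fun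
      | .inl 0 => f (.inl 1) + ∑ i, f (.inr (.inl (.inl i))) + ∑ j, f (.inr (.inl (.inr (j, 0))))
      | .inl 1 => f (.inl 0) + f (.inl 2)
      | .inl 2 => f (.inl 1) + f (.inl 3)
      | .inl 3 => f (.inl 2) + ∑ i, f (.inr (.inr (.inl i))) + ∑ j, f (.inr (.inr (.inr (j, 0))))
      | .inr (.inl (.inl _)) => f (.inl 0)
      | .inr (.inl (.inr (j, 0))) => f (.inl 0) + f (.inr (.inl (.inr (j, 1))))
      | .inr (.inl (.inr (j, 1))) => f (.inr (.inl (.inr (j, 0))))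
      | .inr (.inr (.inl _)) => f (.inl 3)
      | .inr (.inr (.inr (j, 0))) => f (.inl 3) + f (.inr (.inr (.inr (j, 1))))
      | .inr (.inr (.inr (j, 1))) => f (.inr (.inr (.inr (j, 0)))) := by
  have path_adj : ∀ a b : Fin 4,
      (∃ i : Fin 3, a = i.castSucc ∧ b = i.succ) ↔ a.val + 1 = b.val := by decide
  funext v
  rcases v with i | (i | ⟨j, k⟩) | (i | ⟨j, k⟩)
  · fin_cases i <;>
      simp [mulVec, dotProduct, adjMat, G3, Fintype.sum_sum_type, Fin.sum_univ_four,
        Fintype.sum_prod_type, path_adj, add_assoc]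
  · simp [mulVec, dotProduct, adjMat, G3, Fintype.sum_sum_type]
  · fin_cases k <;>
      simp [mulVec, dotProduct, adjMat, G3, Fintype.sum_sum_type, Fintype.sum_prod_type]
  · simp [mulVec, dotProduct, adjMat, G3, Fintype.sum_sum_type]
  · fin_cases k <;>
      simp [mulVec, dotProduct, adjMat, G3, Fintype.sum_sum_type, Fintype.sum_prod_type]

/-- Reversal of the path `v₁ v₃ v₄ v₂`, which exchanges the branches at its two ends. -/
def G3.swapIso (r s p q : ℕ) : G3 r s p q ≃g G3 p q r s where
  toEquiv := Equiv.sumCongr Fin.revPerm (Equiv.sumComm _ _)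
  map_rel_iff' := by
    have rev_eq_zero : ∀ i : Fin 4, i.rev = 0 ↔ i = 3 := by decide
    have rev_eq_three : ∀ i : Fin 4, i.rev = 3 ↔ i = 0 := by decide
    rintro (i | (i | ⟨i, k⟩) | (i | ⟨i, k⟩)) (j | (j | ⟨j, l⟩) | (j | ⟨j, l⟩))
    · revert i j
      simp only [G3, exists_and_left, Equiv.sumCongr_apply, Sum.map_inl, Fin.revPerm_apply,
        SimpleGraph.fromRel_adj, ne_eq, Sum.inl.injEq, reduceCtorEq, exists_false, and_false,
        or_false]
      decide
    all_goals simp [G3, rev_eq_zero, rev_eq_three]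

theorem specRad_G3_swap (r s p q : ℕ) : specRad (G3 r s p q) = specRad (G3 p q r s) :=
  specRad_congr (G3.swapIso r s p q)

end Adjacency

section PathReduction

/-- If `f` is an eigenvector of `G3 r s p q` for the eigenvalue `x = √y > 1`, then
`x * f v₃ = endRatio r s y * f v₁`, where `v₃` is the neighbour of `v₁` on the path. It accounts
for the `r` pendant vertices and `s` pendant paths of length 2 at `v₁`. -/
noncomputable def endRatio (r s : ℕ) (y : ℝ) : ℝ := y - r - s * (y / (y - 1))

/-- The determinant of the eigenvector equations on the path `v₁ v₃ v₄ v₂` for the eigenvalue `√y`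
when the end ratios at `v₁` and `v₂` are `a` and `b`, multiplied by `y`. -/
def pathDet (y a b : ℝ) : ℝ := y * (a - 1) * (b - 1) - a * b

/-- The function of `y > 1` whose only zero is the square of the spectral radius of `G3 r s p q`.
Raising both end ratios to at least `1` discards the zeros of `pathDet` that belong to smaller
eigenvalues. -/
noncomputable def clampedDet (r s p q : ℕ) (y : ℝ) : ℝ :=
  pathDet y (max 1 (endRatio r s y)) (max 1 (endRatio p q y))

/-- The extension of a vector on the path `v₁ v₃ v₄ v₂` to `G3 r s p q` that satisfies the
eigenvector equations for `x` at all the vertices of the branches. -/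
noncomputable def branchExtension (r s p q : ℕ) (x : ℝ) (f : Fin 4 → ℝ) :
    Fin 4 ⊕ ((Fin r ⊕ Fin s × Fin 2) ⊕ (Fin p ⊕ Fin q × Fin 2)) → ℝ
  | .inl i => f i
  | .inr (.inl (.inl _)) => f 0 / x
  | .inr (.inl (.inr (_, 0))) => f 0 * x / (x ^ 2 - 1)
  | .inr (.inl (.inr (_, 1))) => f 0 / (x ^ 2 - 1)
  | .inr (.inr (.inl _)) => f 3 / x
  | .inr (.inr (.inr (_, 0))) => f 3 * x / (x ^ 2 - 1)
  | .inr (.inr (.inr (_, 1))) => f 3 / (x ^ 2 - 1)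

variable {r s p q : ℕ} {x y a b : ℝ} {f : Fin 4 → ℝ}

theorem branchExtension_pos (hx : 1 < x) (hf : ∀ i, 0 < f i)
    (v : Fin 4 ⊕ ((Fin r ⊕ Fin s × Fin 2) ⊕ (Fin p ⊕ Fin q × Fin 2))) :
    0 < branchExtension r s p q x f v := by
  have : 0 < x := one_pos.trans hx
  have : 0 < x ^ 2 - 1 := by nlinarith
  have := hf 0
  have := hf 3
  rcases v with i | (i | ⟨j, k⟩) | (i | ⟨j, k⟩)
  · exact hf i
  · simp only [branchExtension]; positivity
  · fin_cases k <;> simp only [branchExtension] <;> positivity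
  · simp only [branchExtension]; positivity
  · fin_cases k <;> simp only [branchExtension] <;> positivity

theorem adjMat_mulVec_branchExtension (hx : 1 < x) (h₁ : x * f 1 = endRatio r s (x ^ 2) * f 0)
    (h₃ : x * f 1 = f 0 + f 2) (h₄ : x * f 2 = f 1 + f 3)
    (h₂ : x * f 2 = endRatio p q (x ^ 2) * f 3) :
    adjMat (G3 r s p q) *ᵥ branchExtension r s p q x f = x • branchExtension r s p q x f := by
  have hx₀ : x ≠ 0 := (one_pos.trans hx).ne'
  have hx₂ : x ^ 2 - 1 ≠ 0 := by nlinarith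
  have end_eq (m n : ℕ) (u v : ℝ) (h : x * v = endRatio m n (x ^ 2) * u) :
      v + m * (u / x) + n * (u * x / (x ^ 2 - 1)) = x * u := by
    apply mul_left_cancel₀ hx₀
    rw [mul_add, mul_add, h, endRatio]
    field_simp
    ring
  have middle_eq (u : ℝ) : u + u / (x ^ 2 - 1) = x * (u * x / (x ^ 2 - 1)) := by
    field_simp
    ring
  rw [adjMat_G3_mulVec]
  funext v
  rcases v with i | (i | ⟨j, k⟩) | (i | ⟨j, k⟩)
  · fin_cases i
    · simpa [branchExtension] using end_eq r s _ _ h₁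
    · exact h₃.symm
    · exact h₄.symm
    · simpa [branchExtension] using end_eq p q _ _ h₂
  · exact (mul_div_cancel₀ _ hx₀).symm
  · fin_cases k
    · exact middle_eq _
    · simp only [branchExtension, Pi.smul_apply, smul_eq_mul]; ring
  · exact (mul_div_cancel₀ _ hx₀).symm
  · fin_cases k
    · exact middle_eq _
    · simp only [branchExtension, Pi.smul_apply, smul_eq_mul]; ring

theorem one_lt_left_of_pathDet_nonneg (ha : 1 ≤ a) (hb : 1 ≤ b) (h : 0 ≤ pathDet y a b) :
    1 < a := by
  refine ha.lt_of_ne ?_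
  rintro rfl
  simp only [pathDet] at h
  linarith

theorem pathDet_comm (y a b : ℝ) : pathDet y a b = pathDet y b a := by
  unfold pathDet
  ring

theorem clampedDet_eq_pathDet (ha : 1 < endRatio r s y) (hb : 1 < endRatio p q y) :
    clampedDet r s p q y = pathDet y (endRatio r s y) (endRatio p q y) := by
  rw [clampedDet, max_eq_right ha.le, max_eq_right hb.le]

theorem one_lt_endRatio_of_clampedDet_nonneg (h : 0 ≤ clampedDet r s p q y) :
    1 < endRatio r s y ∧ 1 < endRatio p q y := by
  have one_lt_max {u v : ℝ} (h : 0 ≤ pathDet y (max 1 u) (max 1 v)) : 1 < u := by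
    simpa using one_lt_left_of_pathDet_nonneg (le_max_left 1 u) (le_max_left 1 v) h
  exact ⟨one_lt_max h, one_lt_max (by rw [pathDet_comm]; exact h)⟩

theorem clampedDet_neg_of_pathDet_neg
    (h : 1 < endRatio r s y → 1 < endRatio p q y →
      pathDet y (endRatio r s y) (endRatio p q y) < 0) :
    clampedDet r s p q y < 0 := by
  by_contra! hn
  obtain ⟨ha, hb⟩ := one_lt_endRatio_of_clampedDet_nonneg hn
  exact (h ha hb).not_ge (clampedDet_eq_pathDet ha hb ▸ hn)

theorem specRad_G3_eq_sqrt (hy : 1 < y) (h : clampedDet r s p q y = 0) :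
    specRad (G3 r s p q) = √y := by
  obtain ⟨ha, hb⟩ := one_lt_endRatio_of_clampedDet_nonneg h.ge
  rw [clampedDet_eq_pathDet ha hb] at h
  have hx : 1 < √y := Real.lt_sqrt_of_sq_lt (by simpa using hy)
  obtain ⟨x, hxy⟩ : ∃ x, x = √y := ⟨_, rfl⟩
  obtain rfl : y = x ^ 2 := by rw [hxy, Real.sq_sqrt (by linarith)]
  rw [← hxy] at hx ⊢
  set α := endRatio r s (x ^ 2)
  set β := endRatio p q (x ^ 2)
  have hx₀ : 0 < x := one_pos.trans hx
  have hα₁ : 0 < α - 1 := sub_pos.mpr ha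
  have hβ₀ : 0 < β := one_pos.trans hb
  unfold pathDet at h
  -- The vector is chosen so that of the four equations on the path only the one at `v₄` needs `h`.
  refine specRad_eq_of_pos
    (branchExtension_pos (f := ![β, α * β / x, (α - 1) * β, x * (α - 1)]) hx ?_)
    (adjMat_mulVec_branchExtension hx ?_ ?_ ?_ ?_)
  · have hα₀ : 0 < α := one_pos.trans ha
    intro i
    fin_cases i
    · exact hβ₀
    · exact div_pos (mul_pos hα₀ hβ₀) hx₀
    · exact mul_pos hα₁ hβ₀
    · exact mul_pos hx₀ hα₁
  · change x * (α * β / x) = α * β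
    field_simp
  · change x * (α * β / x) = β + (α - 1) * β
    field_simp
    ring
  · change x * ((α - 1) * β) = α * β / x + x * (α - 1)
    field_simp
    linarith
  · change x * ((α - 1) * β) = β * (x * (α - 1))
    ring

end PathReduction

section Roots

variable {r s p q : ℕ} {y : ℝ}

theorem continuousOn_endRatio (r s : ℕ) : ContinuousOn (endRatio r s) (Ioi 1) := by
  have (y : ℝ) (hy : y ∈ Ioi 1) : y - 1 ≠ 0 := (sub_pos.mpr hy).ne'
  unfold endRatio
  fun_prop (disch := assumption)

theorem continuousOn_clampedDet (r s p q : ℕ) : ContinuousOn (clampedDet r s p q) (Ioi 1) := by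
  have hα := continuousOn_endRatio r s
  have hβ := continuousOn_endRatio p q
  unfold clampedDet pathDet
  fun_prop

theorem endRatio_two_le_one (h : 0 < r + s) : endRatio r s 2 ≤ 1 := by
  have : (1 : ℝ) ≤ r + s := by exact_mod_cast h
  have : (0 : ℝ) ≤ s := s.cast_nonneg
  unfold endRatio
  linarith

theorem clampedDet_two_neg (r s p q : ℕ) : clampedDet r s p q 2 < 0 := by
  refine clampedDet_neg_of_pathDet_neg fun ha hb => ?_
  have hrs : ¬ 0 < r + s := fun h => ha.not_ge (endRatio_two_le_one h)
  have hpq : ¬ 0 < p + q := fun h => hb.not_ge (endRatio_two_le_one h)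
  obtain ⟨rfl, rfl⟩ : r = 0 ∧ s = 0 := by omega
  obtain ⟨rfl, rfl⟩ : p = 0 ∧ q = 0 := by omega
  norm_num [pathDet, endRatio]

theorem two_le_endRatio (hy : 2 + r + 2 * s ≤ y) : 2 ≤ endRatio r s y := by
  have : (0 : ℝ) ≤ s := s.cast_nonneg
  have : (0 : ℝ) ≤ r := r.cast_nonneg
  have div_le_two : y / (y - 1) ≤ 2 := by rw [div_le_iff₀ (by linarith)]; linarith
  unfold endRatio
  nlinarith

theorem pathDet_pos {a b : ℝ} (hy : 4 < y) (ha : 2 ≤ a) (hb : 2 ≤ b) : 0 < pathDet y a b := by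
  refine sub_pos.mpr ?_
  calc a * b ≤ (2 * (a - 1)) * (2 * (b - 1)) := by gcongr <;> linarith
    _ = 4 * (a - 1) * (b - 1) := by ring
    _ < y * (a - 1) * (b - 1) := by gcongr <;> linarith

theorem eventually_clampedDet_pos (r s p q : ℕ) : ∀ᶠ y in atTop, 0 < clampedDet r s p q y := by
  filter_upwards [eventually_gt_atTop 4, eventually_ge_atTop (2 + r + 2 * s : ℝ),
    eventually_ge_atTop (2 + p + 2 * q : ℝ)] with y hy hrs hpq
  have ha := two_le_endRatio hrs
  have hb := two_le_endRatio hpq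
  rw [clampedDet_eq_pathDet (one_lt_two.trans_le ha) (one_lt_two.trans_le hb)]
  exact pathDet_pos hy ha hb

theorem exists_gt_clampedDet_pos (r s p q : ℕ) (y : ℝ) : ∃ z > y, 0 < clampedDet r s p q z :=
  ((eventually_gt_atTop y).and (eventually_clampedDet_pos r s p q)).exists

theorem exists_clampedDet_eq_zero {z : ℝ} (hy : 1 < y) (hyz : y ≤ z)
    (hneg : clampedDet r s p q y < 0) (hpos : 0 < clampedDet r s p q z) :
    ∃ t ∈ Ioo y z, clampedDet r s p q t = 0 :=
  intermediate_value_Ioo hyz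
    ((continuousOn_clampedDet r s p q).mono fun _ ht => hy.trans_le ht.1) ⟨hneg, hpos⟩

theorem sqrt_lt_specRad_G3 (hy : 1 < y) (h : clampedDet r s p q y < 0) :
    √y < specRad (G3 r s p q) := by
  obtain ⟨z, hyz, hz⟩ := exists_gt_clampedDet_pos r s p q y
  obtain ⟨t, ht, ht₀⟩ := exists_clampedDet_eq_zero hy hyz.le h hz
  rw [specRad_G3_eq_sqrt (hy.trans ht.1) ht₀]
  exact Real.sqrt_lt_sqrt (by linarith) ht.1

theorem specRad_G3_lt_sqrt (hy : 2 ≤ y) (h : 0 < clampedDet r s p q y) :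
    specRad (G3 r s p q) < √y := by
  obtain ⟨t, ht, ht₀⟩ :=
    exists_clampedDet_eq_zero one_lt_two hy (clampedDet_two_neg r s p q) h
  rw [specRad_G3_eq_sqrt (one_lt_two.trans ht.1) ht₀]
  exact Real.sqrt_lt_sqrt (by linarith [ht.1]) ht.2

theorem exists_specRad_G3_eq_sqrt (r s p q : ℕ) :
    ∃ y > 2, clampedDet r s p q y = 0 ∧ specRad (G3 r s p q) = √y := by
  obtain ⟨z, hz₂, hz⟩ := exists_gt_clampedDet_pos r s p q 2
  obtain ⟨y, hy, hy₀⟩ :=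
    exists_clampedDet_eq_zero one_lt_two hz₂.le (clampedDet_two_neg r s p q) hz
  exact ⟨y, hy.1, hy₀, specRad_G3_eq_sqrt (one_lt_two.trans hy.1) hy₀⟩

end Roots

section Comparison

variable {r s p q : ℕ} {y a b : ℝ}

theorem endRatio_succ_left (r s : ℕ) (y : ℝ) : endRatio (r + 1) s y = endRatio r s y - 1 := by
  unfold endRatio
  push_cast
  ring

theorem endRatio_succ_right (hy : 1 < y) :
    endRatio r (s + 1) y = endRatio (r + 1) s y - (y - 1)⁻¹ := by
  have hy₁ : y - 1 ≠ 0 := (sub_pos.mpr hy).ne'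
  unfold endRatio
  push_cast
  field_simp
  ring

theorem endRatio_lt_self (hy : 1 < y) (hrs : 0 < r + s) : endRatio r s y < y := by
  have one_lt_div : 1 < y / (y - 1) := by rw [one_lt_div (by linarith)]; linarith
  have : (0 : ℝ) ≤ s := s.cast_nonneg
  have : (1 : ℝ) ≤ r + s := by exact_mod_cast hrs
  unfold endRatio
  nlinarith

theorem endRatio_le_endRatio (hy : 1 < y) (hpr : p ≤ r) (hqs : q ≤ s) :
    endRatio r s y ≤ endRatio p q y := by
  have : 0 ≤ y / (y - 1) := div_nonneg (by linarith) (by linarith)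
  unfold endRatio
  gcongr

theorem endRatio_lt_endRatio (hy : 1 < y) (hpr : p ≤ r) (hqs : q < s) :
    endRatio r s y < endRatio p q y := by
  refine (endRatio_le_endRatio hy hpr le_rfl).trans_lt ?_
  have : 0 < y / (y - 1) := div_pos (by linarith) (by linarith)
  unfold endRatio
  gcongr

theorem pathDet_lt_of_balance {k : ℝ} (hy : 1 < y) (hk : 0 < k) (hab : a + k < b) :
    pathDet y a b < pathDet y (a + k) (b - k) := by
  have diff_pos : 0 < (y - 1) * (k * (b - (a + k))) :=
    mul_pos (sub_pos.mpr hy) (mul_pos hk (sub_pos.mpr hab))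
  unfold pathDet
  linarith

theorem pathDet_exchange_neg (hy : 1 < y) (ha : 0 < a) (hb : 1 < b) (hay : a < y)
    (hab : a - 1 - (y - 1)⁻¹ ≤ b) (h : pathDet y a b = 0) :
    pathDet y (a - 1) (b + (y - 1)⁻¹) < 0 := by
  obtain ⟨u, rfl⟩ : ∃ u, y = u + 1 := ⟨y - 1, by ring⟩
  obtain ⟨c, rfl⟩ : ∃ c, a = c + 1 := ⟨a - 1, by ring⟩
  obtain ⟨d, rfl⟩ : ∃ d, b = d + 1 := ⟨b - 1, by ring⟩
  simp only [pathDet, add_sub_cancel_right] at *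
  have hu : 0 < u := by linarith
  have hd : 0 < d := by linarith
  have mul_eq : (c * u - 1) * d = c + 1 := by linarith
  have factor_pos : 0 < c * u - 1 := pos_of_mul_pos_left (by rw [mul_eq]; linarith) hd.le
  have factor_le : c * u - 1 ≤ (d + 1) * u := by
    have := mul_le_mul_of_nonneg_right hab hu.le
    rwa [sub_mul, inv_mul_cancel₀ hu.ne'] at this
  -- The determinant after the exchange is `(c * u - 1 - d * u ^ 2) / u`.
  have factor_lt : c * u - 1 < d * u ^ 2 := by
    refine lt_of_mul_lt_mul_left ?_ factor_pos.le
    calc (c * u - 1) * (c * u - 1) ≤ (c * u - 1) * ((d + 1) * u) := by gcongr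
      _ = c * u + u * u * c := by linear_combination u * mul_eq
      _ < u * u + u * u * c := by gcongr; linarith
      _ = (c * u - 1) * (d * u ^ 2) := by linear_combination -u ^ 2 * mul_eq
  refine neg_of_mul_neg_left ?_ hu.le
  calc ((u + 1) * (c - 1) * (d + 1 + u⁻¹ - 1) - c * (d + 1 + u⁻¹)) * u
      _ = c * u - 1 - d * u ^ 2 := by
          linear_combination u * h + ((c - 1) * u - 1) * mul_inv_cancel₀ hu.ne'
      _ < 0 := sub_neg.mpr factor_lt

theorem specRad_G3_lt_of_balance {m n : ℕ} (hpr : p ≤ r) (hsum : m + n = s + q) (hqm : q < m)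
    (hms : m < s) : specRad (G3 r m p n) < specRad (G3 r s p q) := by
  obtain ⟨y, hy₂, hy, hrad⟩ := exists_specRad_G3_eq_sqrt r s p q
  have hy₁ : 1 < y := one_lt_two.trans hy₂
  obtain ⟨ha, hb⟩ := one_lt_endRatio_of_clampedDet_nonneg hy.ge
  rw [clampedDet_eq_pathDet ha hb] at hy
  have hz : 0 < y / (y - 1) := div_pos (by linarith) (by linarith)
  have hmsR : (0 : ℝ) < s - m := sub_pos.mpr (by exact_mod_cast hms)
  have hsumR : (m + n : ℝ) = s + q := by exact_mod_cast hsum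
  set k := (s - m) * (y / (y - 1)) with hk
  have hk₀ : 0 < k := mul_pos hmsR hz
  have left_eq : endRatio r m y = endRatio r s y + k := by
    simp only [hk, endRatio]
    ring
  have right_eq : endRatio p n y = endRatio p q y - k := by
    simp only [hk, endRatio]
    linear_combination -(y / (y - 1)) * hsumR
  have left_lt : endRatio r s y + k < endRatio p q y := by
    rw [← left_eq]
    exact endRatio_lt_endRatio hy₁ hpr hqm
  rw [hrad]
  refine specRad_G3_lt_sqrt hy₂.le ?_
  rw [clampedDet_eq_pathDet (by linarith) (by linarith), left_eq, right_eq, ← hy]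
  exact pathDet_lt_of_balance hy₁ hk₀ left_lt

theorem specRad_G3_lt_exchange (hpr : p ≤ r) (hqs : q ≤ s) (hrs : 0 < r + s) :
    specRad (G3 r s p (q + 1)) < specRad (G3 (r + 1) s (p + 1) q) := by
  obtain ⟨y, hy₂, hy, hrad⟩ := exists_specRad_G3_eq_sqrt r s p (q + 1)
  have hy₁ : 1 < y := one_lt_two.trans hy₂
  obtain ⟨ha, hb⟩ := one_lt_endRatio_of_clampedDet_nonneg hy.ge
  rw [clampedDet_eq_pathDet ha hb] at hy
  rw [hrad]
  refine sqrt_lt_specRad_G3 hy₁ (clampedDet_neg_of_pathDet_neg fun _ _ => ?_)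
  have right_eq : endRatio (p + 1) q y = endRatio p (q + 1) y + (y - 1)⁻¹ := by
    rw [endRatio_succ_right hy₁, sub_add_cancel]
  rw [endRatio_succ_left, right_eq]
  refine pathDet_exchange_neg hy₁ (one_pos.trans ha) hb (endRatio_lt_self hy₁ hrs) ?_ hy
  rw [← endRatio_succ_left, ← endRatio_succ_right hy₁]
  exact endRatio_le_endRatio hy₁ hpr (by omega)

theorem nonempty_iso_balanced (r : ℕ) (hsq : s ≤ q + 1) (hqs : q ≤ s + 1) :
    Nonempty (G3 r s r q ≃g G3 r ((s + q + 1) / 2) r ((s + q) / 2)) := by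
  rcases le_or_gt q s with hle | hlt
  · rw [show (s + q + 1) / 2 = s by omega, show (s + q) / 2 = q by omega]
    exact ⟨SimpleGraph.Iso.refl⟩
  · rw [show (s + q + 1) / 2 = q by omega, show (s + q) / 2 = s by omega]
    exact ⟨G3.swapIso r s r q⟩

theorem specRad_balanced_lt (r : ℕ) (h : q + 2 ≤ s ∨ s + 2 ≤ q) :
    specRad (G3 r ((s + q + 1) / 2) r ((s + q) / 2)) < specRad (G3 r s r q) := by
  rcases h with h | h
  · exact specRad_G3_lt_of_balance le_rfl (by omega) (by omega) (by omega)
  · rw [specRad_G3_swap r s r q]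
    exact specRad_G3_lt_of_balance le_rfl (by omega) (by omega) (by omega)

end Comparison

theorem specRad_G3_claim2_general (r s q : ℕ) :
    specRad (G3 r ((s + q + 1) / 2) r ((s + q) / 2)) ≤ specRad (G3 r s r q) ∧
    (q ≤ s + 1 → 1 ≤ q → 0 < r + s →
      specRad (G3 r s r q) < specRad (G3 (r + 1) s (r + 1) (q - 1))) ∧
    (specRad (G3 r ((s + q + 1) / 2) r ((s + q) / 2)) = specRad (G3 r s r q) ↔
      Nonempty (G3 r s r q ≃g G3 r ((s + q + 1) / 2) r ((s + q) / 2))) := by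
  have lt_or_iso : specRad (G3 r ((s + q + 1) / 2) r ((s + q) / 2)) < specRad (G3 r s r q) ∨
      Nonempty (G3 r s r q ≃g G3 r ((s + q + 1) / 2) r ((s + q) / 2)) := by
    by_cases h : q + 2 ≤ s ∨ s + 2 ≤ q
    · exact .inl (specRad_balanced_lt r h)
    · exact .inr (nonempty_iso_balanced r (by omega) (by omega))
  have eq_of_iso : Nonempty (G3 r s r q ≃g G3 r ((s + q + 1) / 2) r ((s + q) / 2)) →
      specRad (G3 r ((s + q + 1) / 2) r ((s + q) / 2)) = specRad (G3 r s r q) :=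
    fun ⟨e⟩ => (specRad_congr e).symm
  refine ⟨lt_or_iso.elim le_of_lt fun h => (eq_of_iso h).le, fun hqs hq hrs => ?_,
    fun h => lt_or_iso.resolve_left h.not_lt, eq_of_iso⟩
  obtain ⟨q, rfl⟩ := Nat.exists_eq_add_of_le' hq
  exact specRad_G3_lt_exchange le_rfl (by omega) hrs

/-- Let `s + 1 ≥ q ≥ 2`. Then `ρ(H(2s+2q+4)) ≤ ρ(G₃(0,s,0,q)) < ρ(G₃(1,s,1,q-1))`, and
equality holds on the left iff `G₃(0,s,0,q) ≅ H(2s+2q+4)`.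
Here `H(2s+2q+4) = G₃(0, ⌈(s+q)/2⌉, 0, ⌊(s+q)/2⌋)`. -/
theorem specRad_G3_claim2 {s q : ℕ} (h1 : q ≤ s + 1) (h2 : 2 ≤ q) :
    specRad (G3 0 ((s + q + 1) / 2) 0 ((s + q) / 2)) ≤ specRad (G3 0 s 0 q) ∧
    specRad (G3 0 s 0 q) < specRad (G3 1 s 1 (q - 1)) ∧
    (specRad (G3 0 ((s + q + 1) / 2) 0 ((s + q) / 2)) = specRad (G3 0 s 0 q) ↔
      Nonempty (G3 0 s 0 q ≃g G3 0 ((s + q + 1) / 2) 0 ((s + q) / 2))) := by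
  obtain ⟨le, lt, eq_iff⟩ := specRad_G3_claim2_general 0 s q
  exact ⟨le, lt h1 (by omega) (by omega), eq_iff⟩
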